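/- (Euclidean-Scale Utility Bound.) Let M : X → PMF(O) be a mechanism on a finite product input space satisfying (ε,δ)-differential privacy, let C be a finite consequence space, u : C → ℝ any utility function, and f : O → C any post-processing function. Then for every agent j, every environment x₋ⱼ, and every pair of responses x_j, x'_j ∈ X_j: |Σ_{c∈C} u(c)·P(f(M(x_j,x₋ⱼ)) = c) − Σ_{c∈C} u(c)·P(f(M(x'_j,x₋ⱼ)) = c)| ≤ (e^ε − 1 + δ·|C|)·(max_{c∈C} u(c) − min_{c∈C} u(c)). -/

import Mathlib

open scoped ENNReal

/-- Two inputs of a product space are neighboring if they differ in exactly one coordinate. -/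
def Neighboring {n : ℕ} {X : Fin n → Type*} (x x' : ∀ j, X j) : Prop :=
  ∃ j : Fin n, x j ≠ x' j ∧ ∀ i : Fin n, i ≠ j → x i = x' i

/-- `M` satisfies `(ε,δ)`-differential privacy. -/
def IsDP {n : ℕ} {X : Fin n → Type*} {O : Type*}
    (M : (∀ j, X j) → PMF O) (ε δ : ℝ) : Prop :=
  ∀ x x' : ∀ j, X j, Neighboring x x' → ∀ S : Set O,
    (M x).toOuterMeasure S ≤
      ENNReal.ofReal (Real.exp ε) * (M x').toOuterMeasure S + ENNReal.ofReal δ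

/- A function with values in `[B, A]` stays within `(A - B) / 2` of the midpoint of that interval,
and shifting it by a constant does not change the difference of its expectations under `p` and `q`,
which is therefore at most `(A - B)` times their total variation distance. That distance is
`p S - q S` for the single event `S = {q < p}`, where privacy gives
`p S - q S ≤ (e^ε - 1) q S + δ ≤ e^ε - 1 + δ`. Applying privacy to this event instead of to each
consequence separately is what avoids the factor `|C|` on `δ`. -/

lemma mem_Icc_inf'_sup' {α β : Type*} [Lattice β] {s : Finset α} (hs : s.Nonempty) (u : α → β)
    {a : α} (ha : a ∈ s) : u a ∈ Set.Icc (s.inf' hs u) (s.sup' hs u) :=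
  ⟨s.inf'_le u ha, s.le_sup' u ha⟩

section TotalVariation

variable {α : Type*} {p q : PMF α}

/-- The total variation distance of two discrete distributions, encoded as half the `ℓ¹` distance
of their mass functions. It controls differences of expectations of bounded functions. -/
noncomputable def tvDist (p q : PMF α) : ℝ :=
  (∑' a, |(p a).toReal - (q a).toReal|) / 2

lemma hasSum_pmf_toReal (p : PMF α) : HasSum (fun a => (p a).toReal) 1 := by
  rw [← ENNReal.toReal_one, ← p.tsum_coe, ENNReal.tsum_toReal_eq p.apply_ne_top]
  exact ENNReal.hasSum_toReal p.tsum_coe_ne_top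

lemma hasSum_indicator_pmf_toReal (p : PMF α) (S : Set α) :
    HasSum (S.indicator fun a => (p a).toReal) (p.toOuterMeasure S).toReal := by
  have indicator_toReal :
      (S.indicator fun a => (p a).toReal) = fun a => (S.indicator p a).toReal :=
    Set.indicator_comp_of_zero ENNReal.toReal_zero
  have tsum_ne_top := p.tsum_coe_indicator_ne_top S
  rw [indicator_toReal, p.toOuterMeasure_apply,
    ENNReal.tsum_toReal_eq (ENNReal.ne_top_of_tsum_ne_top tsum_ne_top)]
  exact ENNReal.hasSum_toReal tsum_ne_top

lemma summable_mul_pmf_toReal (p : PMF α) {u : α → ℝ} {A B : ℝ} (hu : ∀ a, u a ∈ Set.Icc B A) :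
    Summable fun a => u a * (p a).toReal := by
  refine .of_norm_bounded ((hasSum_pmf_toReal p).summable.mul_left (max |B| |A|)) fun a => ?_
  rw [Real.norm_eq_abs, abs_mul, abs_of_nonneg ENNReal.toReal_nonneg]
  gcongr
  exact abs_le_max_abs_abs (hu a).1 (hu a).2

lemma abs_tsum_mul_sub_tsum_mul_le_mul_tvDist (p q : PMF α) {u : α → ℝ} {A B : ℝ}
    (hu : ∀ a, u a ∈ Set.Icc B A) :
    |∑' a, u a * (p a).toReal - ∑' a, u a * (q a).toReal| ≤ (A - B) * tvDist p q := by
  have hpq := (hasSum_pmf_toReal p).sub (hasSum_pmf_toReal q)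
  have recenter : HasSum (fun a => (u a - (A + B) / 2) * ((p a).toReal - (q a).toReal))
      (∑' a, u a * (p a).toReal - ∑' a, u a * (q a).toReal) := by
    have shifted := ((summable_mul_pmf_toReal p hu).hasSum.sub
      (summable_mul_pmf_toReal q hu).hasSum).sub (hpq.mul_left ((A + B) / 2))
    rw [sub_self, mul_zero, sub_zero] at shifted
    exact shifted.congr_fun fun a => by ring
  have bound : HasSum (fun a => (A - B) / 2 * |(p a).toReal - (q a).toReal|)
      ((A - B) * tvDist p q) := by
    rw [tvDist, mul_div_left_comm, mul_comm]
    exact hpq.summable.abs.hasSum.mul_left ((A - B) / 2)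
  refine recenter.norm_le_of_bounded bound fun a => ?_
  rw [Real.norm_eq_abs, abs_mul]
  gcongr
  rw [abs_le]
  constructor <;> linarith [(hu a).1, (hu a).2]

lemma tvDist_eq_toOuterMeasure_sub (p q : PMF α) :
    tvDist p q =
      (p.toOuterMeasure {a | q a < p a}).toReal - (q.toOuterMeasure {a | q a < p a}).toReal := by
  set S := {a | q a < p a}
  have abs_eq (a : α) : |(p a).toReal - (q a).toReal| =
      2 * (S.indicator (fun a => (p a).toReal) a - S.indicator (fun a => (q a).toReal) a) -
        ((p a).toReal - (q a).toReal) := by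
    by_cases ha : a ∈ S
    · have : (q a).toReal ≤ (p a).toReal := ENNReal.toReal_mono (p.apply_ne_top a) (le_of_lt ha)
      rw [Set.indicator_of_mem ha, Set.indicator_of_mem ha, abs_of_nonneg (by linarith)]
      ring
    · have : (p a).toReal ≤ (q a).toReal := ENNReal.toReal_mono (q.apply_ne_top a) (not_lt.1 ha)
      rw [Set.indicator_of_notMem ha, Set.indicator_of_notMem ha, abs_of_nonpos (by linarith)]
      ring
  have hS := (hasSum_indicator_pmf_toReal p S).sub (hasSum_indicator_pmf_toReal q S)
  have hpq := (hasSum_pmf_toReal p).sub (hasSum_pmf_toReal q)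
  rw [tvDist, tsum_congr abs_eq, ((hS.mul_left 2).sub hpq).tsum_eq]
  ring

lemma toOuterMeasure_pmf_le_one (p : PMF α) (S : Set α) : p.toOuterMeasure S ≤ 1 := by
  rw [p.toOuterMeasure_apply, ← p.tsum_coe]
  exact ENNReal.tsum_le_tsum fun a => Set.indicator_le_self S p a

lemma tvDist_le_of_toOuterMeasure_le {r δ : ℝ} (hr : 1 ≤ r) (hδ : 0 ≤ δ)
    (h : ∀ S : Set α,
      p.toOuterMeasure S ≤ ENNReal.ofReal r * q.toOuterMeasure S + ENNReal.ofReal δ) :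
    tvDist p q ≤ r - 1 + δ := by
  rw [tvDist_eq_toOuterMeasure_sub]
  set S := {a | q a < p a}
  have hq_le : q.toOuterMeasure S ≤ 1 := toOuterMeasure_pmf_le_one q S
  have hq_toReal_le : (q.toOuterMeasure S).toReal ≤ 1 := by
    simpa only [ENNReal.toReal_one] using ENNReal.toReal_mono ENNReal.one_ne_top hq_le
  have rq_ne_top : ENNReal.ofReal r * q.toOuterMeasure S ≠ ∞ :=
    ENNReal.mul_ne_top ENNReal.ofReal_ne_top (ne_top_of_le_ne_top ENNReal.one_ne_top hq_le)
  have hp_toReal_le : (p.toOuterMeasure S).toReal ≤ r * (q.toOuterMeasure S).toReal + δ := by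
    have := ENNReal.toReal_mono (ENNReal.add_ne_top.2 ⟨rq_ne_top, ENNReal.ofReal_ne_top⟩) (h S)
    rwa [ENNReal.toReal_add rq_ne_top ENNReal.ofReal_ne_top, ENNReal.toReal_mul,
      ENNReal.toReal_ofReal (zero_le_one.trans hr), ENNReal.toReal_ofReal hδ] at this
  calc (p.toOuterMeasure S).toReal - (q.toOuterMeasure S).toReal
      ≤ (r - 1) * (q.toOuterMeasure S).toReal + δ := by linarith
    _ ≤ r - 1 + δ := by
        gcongr
        exact mul_le_of_le_one_right (sub_nonneg.2 hr) hq_toReal_le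

end TotalVariation

section DifferentialPrivacy

variable {n : ℕ} {X : Fin n → Type*} {O C : Type*} {M : (∀ j, X j) → PMF O} {ε δ : ℝ}

lemma neighboring_update (x : ∀ i, X i) {j : Fin n} {a b : X j} (hab : a ≠ b) :
    Neighboring (Function.update x j a) (Function.update x j b) :=
  ⟨j, by simpa using hab, fun i hi => by simp [hi]⟩

lemma IsDP.map (hM : IsDP M ε δ) (f : O → C) : IsDP (fun x => (M x).map f) ε δ := by
  intro x x' hxx' S
  simpa only [PMF.toOuterMeasure_map_apply] using hM x x' hxx' (f ⁻¹' S)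

lemma IsDP.toOuterMeasure_update_le (hM : IsDP M ε δ) (hε : 0 ≤ ε) (x : ∀ i, X i) {j : Fin n}
    (a b : X j) (S : Set O) :
    (M (Function.update x j a)).toOuterMeasure S ≤
      ENNReal.ofReal (Real.exp ε) * (M (Function.update x j b)).toOuterMeasure S +
        ENNReal.ofReal δ := by
  by_cases hab : a = b
  · subst hab
    have one_le_exp : 1 ≤ ENNReal.ofReal (Real.exp ε) :=
      ENNReal.one_le_ofReal.2 (Real.one_le_exp hε)
    exact le_add_right (le_mul_of_one_le_left' one_le_exp)
  · exact hM _ _ (neighboring_update x hab) S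

lemma IsDP.tvDist_update_le (hM : IsDP M ε δ) (hε : 0 ≤ ε) (hδ : 0 ≤ δ) (x : ∀ i, X i)
    {j : Fin n} (a b : X j) :
    tvDist (M (Function.update x j a)) (M (Function.update x j b)) ≤ Real.exp ε - 1 + δ :=
  tvDist_le_of_toOuterMeasure_le (Real.one_le_exp hε) hδ (hM.toOuterMeasure_update_le hε x a b)

theorem stmt3_general (hε : 0 ≤ ε) (hδ : 0 ≤ δ) (hM : IsDP M ε δ) {u : C → ℝ} {A B : ℝ}
    (hu : ∀ c, u c ∈ Set.Icc B A) (f : O → C) (x : ∀ i, X i) {j : Fin n} (a b : X j) :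
    |∑' c, u c * ((M (Function.update x j a)).map f c).toReal -
        ∑' c, u c * ((M (Function.update x j b)).map f c).toReal| ≤
      (Real.exp ε - 1 + δ) * (A - B) := by
  obtain ⟨c, -⟩ := ((M (Function.update x j a)).map f).support_nonempty
  have B_le_A : B ≤ A := (hu c).1.trans (hu c).2
  refine (abs_tsum_mul_sub_tsum_mul_le_mul_tvDist _ _ hu).trans ?_
  rw [mul_comm]
  exact mul_le_mul_of_nonneg_right ((hM.map f).tvDist_update_le hε hδ x a b)
    (sub_nonneg.2 B_le_A)

end DifferentialPrivacy

/-- Euclidean-Scale Utility Bound: for an `(ε,δ)`-DP mechanism, any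
real-valued utility function, any post-processor, any agent `j`, any environment and any
pair of responses, the difference of expected utilities is bounded by
`(e^ε - 1 + δ|C|) (max u - min u)`. -/
theorem stmt3 {n : ℕ} {X : Fin n → Type*} [∀ j, Fintype (X j)] {O : Type*}
    {C : Type*} [Fintype C] [Nonempty C]
    (M : (∀ j, X j) → PMF O) (ε δ : ℝ) (hε : 0 ≤ ε) (hδ0 : 0 ≤ δ) (hδ1 : δ ≤ 1)
    (hM : IsDP M ε δ) (u : C → ℝ) (f : O → C)
    (j : Fin n) (x : ∀ i, X i) (a b : X j) :
    |∑ c : C, u c * (((M (Function.update x j a)).map f) c).toReal -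
        ∑ c : C, u c * (((M (Function.update x j b)).map f) c).toReal| ≤
      (Real.exp ε - 1 + δ * (Fintype.card C : ℝ)) *
        (Finset.univ.sup' Finset.univ_nonempty u - Finset.univ.inf' Finset.univ_nonempty u) := by
  have hu (c : C) := mem_Icc_inf'_sup' Finset.univ_nonempty u (Finset.mem_univ c)
  have inf_le_sup := (hu (Classical.arbitrary C)).1.trans (hu (Classical.arbitrary C)).2
  have δ_le : δ ≤ δ * Fintype.card C :=
    le_mul_of_one_le_right hδ0 (Nat.one_le_cast.2 Fintype.card_pos)
  have sharp_bound := stmt3_general hε hδ0 hM hu f x a b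
  simp only [tsum_fintype] at sharp_bound
  exact sharp_bound.trans <|
    mul_le_mul_of_nonneg_right (by gcongr) (sub_nonneg.2 inf_le_sup)
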